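/- arXiv:1801.08056 — 2 statements merged into one kernel-verified Lean document; each statement's English description precedes it below -/
import Mathlib

section
/- For every n ≥ 0, the identity of polynomials in one variable x holds: Σ_{π ∈ B_n} x^{fdes(π)} = Σ_{k=0}^{n} C(n,k) · (Σ_{σ ∈ Q_k} x^{fap(σ)}) · (Σ_{σ ∈ Q_{n−k}} x^{2·ap(σ)}), where C(n,k) is the binomial coefficient. -/
open Finset MvPolynomial

/-- Stirling permutations of order `n`, encoded as functions `Fin (2*n) → Fin (n+1)`
in one-line notation (position `i` holds the letter `σ (i) ∈ {1,…,n}`), such that each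
letter `1,…,n` occurs exactly twice and all entries between the two occurrences of a
letter are larger than that letter. -/
def StirlingSet (n : ℕ) : Finset (Fin (2*n) → Fin (n+1)) :=
  Finset.univ.filter (fun σ =>
    (∀ v : Fin (n+1), (v : ℕ) ≠ 0 →
        (Finset.univ.filter (fun i => σ i = v)).card = 2) ∧
    (∀ i j k : Fin (2*n), i < j → j < k → σ i = σ k → σ i < σ j))

/-- The letter at position `i ∈ {1,…,2n}` of a Stirling permutation, with the
convention that positions outside this range (in particular position `0`) hold `0`. -/
def sval {n : ℕ} (σ : Fin (2*n) → Fin (n+1)) (i : ℕ) : ℕ :=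
  if h : 1 ≤ i ∧ i ≤ 2*n then (σ ⟨i - 1, by omega⟩ : ℕ) else 0

/-- The number of ascent-plateaus: indices `2 ≤ i ≤ 2n-1` with `σ_{i-1} < σ_i = σ_{i+1}`. -/
def apQ {n : ℕ} (σ : Fin (2*n) → Fin (n+1)) : ℕ :=
  ((Finset.Icc 2 (2*n - 1)).filter
    (fun i => sval σ (i-1) < sval σ i ∧ sval σ i = sval σ (i+1))).card

/-- The number of left ascent-plateaus: indices `1 ≤ i ≤ 2n-1` with
`σ_{i-1} < σ_i = σ_{i+1}`, where `σ_0 = 0`. -/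
def lapQ {n : ℕ} (σ : Fin (2*n) → Fin (n+1)) : ℕ :=
  ((Finset.Icc 1 (2*n - 1)).filter
    (fun i => sval σ (i-1) < sval σ i ∧ sval σ i = sval σ (i+1))).card

/-- The number of double ascents: indices `1 ≤ i ≤ 2n-1` with
`σ_{i-1} < σ_i < σ_{i+1}`, where `σ_0 = 0`. -/
def dascQ {n : ℕ} (σ : Fin (2*n) → Fin (n+1)) : ℕ :=
  ((Finset.Icc 1 (2*n - 1)).filter
    (fun i => sval σ (i-1) < sval σ i ∧ sval σ i < sval σ (i+1))).card

/-- The number of descent-plateaus: indices `2 ≤ i ≤ 2n-1` with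
`σ_{i-1} > σ_i = σ_{i+1}`. -/
def dpQ {n : ℕ} (σ : Fin (2*n) → Fin (n+1)) : ℕ :=
  ((Finset.Icc 2 (2*n - 1)).filter
    (fun i => sval σ i < sval σ (i-1) ∧ sval σ i = sval σ (i+1))).card

/-- The number of ascents: indices `1 ≤ i ≤ 2n-1` with `σ_i < σ_{i+1}` or `i = 1`. -/
def ascQ {n : ℕ} (σ : Fin (2*n) → Fin (n+1)) : ℕ :=
  ((Finset.Icc 1 (2*n - 1)).filter
    (fun i => sval σ i < sval σ (i+1) ∨ i = 1)).card

/-- The number of plateaus: indices `1 ≤ i ≤ 2n-1` with `σ_i = σ_{i+1}`. -/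
def platQ {n : ℕ} (σ : Fin (2*n) → Fin (n+1)) : ℕ :=
  ((Finset.Icc 1 (2*n - 1)).filter (fun i => sval σ i = sval σ (i+1))).card

/-- The flag ascent-plateau number: `2·ap(σ)+1` if `σ_1 = σ_2`, and `2·ap(σ)` otherwise. -/
def fapQ {n : ℕ} (σ : Fin (2*n) → Fin (n+1)) : ℕ :=
  if 1 ≤ n ∧ sval σ 1 = sval σ 2 then 2 * apQ σ + 1 else 2 * apQ σ

/-- Signed permutations (the hyperoctahedral group `B_n`), encoded as a pair of a
permutation of `Fin n` and a sign vector; the one-line word is recovered by `bval`. -/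
abbrev SignedPerm (n : ℕ) := Equiv.Perm (Fin n) × (Fin n → Bool)

/-- The value `π(i) ∈ ±[n]` of the signed permutation at position `i ∈ {1,…,n}`,
with the convention `π(0) = 0` (and value `0` outside the range). -/
def bval {n : ℕ} (π : SignedPerm n) (i : ℕ) : ℤ :=
  if h : 1 ≤ i ∧ i ≤ n then
    (if π.2 ⟨i - 1, by omega⟩ then -(((π.1 ⟨i - 1, by omega⟩ : ℕ) : ℤ) + 1)
      else ((π.1 ⟨i - 1, by omega⟩ : ℕ) : ℤ) + 1)
  else 0

/-- The type-A descent number of a signed permutation: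
`#{i ∈ [n-1] : π(i) > π(i+1)}`. -/
def desA {n : ℕ} (π : SignedPerm n) : ℕ :=
  ((Finset.Icc 1 (n - 1)).filter (fun i => bval π (i+1) < bval π i)).card

/-- The type-B descent number of a signed permutation:
`#{i ∈ {0,1,…,n-1} : π(i) > π(i+1)}` with `π(0) = 0`. -/
def desB {n : ℕ} (π : SignedPerm n) : ℕ :=
  ((Finset.range n).filter (fun i => bval π (i+1) < bval π i)).card

/-- The flag descent number: `2·des_A(π)+1` if `π(1) < 0`, and `2·des_A(π)` otherwise. -/
def fdes {n : ℕ} (π : SignedPerm n) : ℕ :=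
  if bval π 1 < 0 then 2 * desA π + 1 else 2 * desA π

/-!
Insert the largest letter in all possible ways: as a pair `(n + 1)(n + 1)` into a Stirling
permutation, as `n + 1` or `-(n + 1)` into a signed permutation. Give an ascent-plateau or a descent
the weight `2`, except at the index `0`, where it has weight `a`. One of weight `c` is destroyed by
exactly two insertions, of which one creates a new one of weight `c` and the other one of weight
`2`. Every other insertion creates a single one, apart from `n + 1` at the end of a signed
permutation, which creates none. Hence the generating polynomials satisfy
`E (n + 1) = (α + 2 n X²) E n + X (1 - X²) (E n)'` with `α = X ^ a` for Stirling permutations and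
`α = X ^ a + 1` for signed permutations. By the Leibniz rule the binomial convolution of two
solutions is the solution whose parameter is the sum of the two parameters. The flag statistics have
`a = 1`, the statistic `2 ap` has `a = 0`, and `X + 1 = X ^ 1 + X ^ 0`.
-/

open scoped Polynomial

section FlagEulerian

variable {R : Type*} [CommRing R]

/-- The polynomials `E n` determined by `E 0 = 1` and
`E (n + 1) = (α + 2 n X²) E n + X (1 - X²) (E n)'`. The generating polynomials of flag statistics
are of this form, with a parameter `α` that depends on the statistic. -/
noncomputable def flagEulerian (α : R[X]) : ℕ → R[X]
  | 0 => 1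
  | n + 1 => (α + 2 * (n : R[X]) * Polynomial.X ^ 2) * flagEulerian α n +
      Polynomial.X * (1 - Polynomial.X ^ 2) * Polynomial.derivative (flagEulerian α n)

theorem flagEulerian_add (α β : R[X]) (n : ℕ) :
    flagEulerian (α + β) n = ∑ ij ∈ antidiagonal n,
      (n.choose ij.1 : R[X]) * (flagEulerian α ij.1 * flagEulerian β ij.2) := by
  induction n with
  | zero => simp [flagEulerian]
  | succ n ih =>
    rw [sum_antidiagonal_choose_succ_mul (fun i j => flagEulerian α i * flagEulerian β j),
      ← sum_add_distrib, flagEulerian, ih, Polynomial.derivative_sum, mul_sum, mul_sum,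
      ← sum_add_distrib]
    refine sum_congr rfl fun ij hij => ?_
    obtain rfl := mem_antidiagonal.1 hij
    rw [← Nat.choose_symm_add]
    simp only [flagEulerian, Polynomial.derivative_mul, Polynomial.derivative_natCast]
    push_cast
    ring

theorem X_mul_derivative_X_pow (k : ℕ) :
    (Polynomial.X : R[X]) * Polynomial.derivative (Polynomial.X ^ k) =
      (k : R[X]) * Polynomial.X ^ k := by
  cases k with
  | zero => simp
  | succ k =>
    rw [Polynomial.derivative_X_pow_succ, map_add, map_natCast, map_one]
    push_cast
    ring

theorem sum_X_pow_eq_flagEulerian {ι : ℕ → Type*} (s : ∀ n, Finset (ι n)) (f : ∀ n, ι n → ℕ)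
    (α : R[X]) (h_zero : ∑ a ∈ s 0, (Polynomial.X : R[X]) ^ f 0 a = 1)
    (h_succ : ∀ n, ∑ b ∈ s (n + 1), (Polynomial.X : R[X]) ^ f (n + 1) b =
      ∑ a ∈ s n, Polynomial.X ^ f n a *
        (α + 2 * (n : R[X]) * Polynomial.X ^ 2 + (f n a : R[X]) * (1 - Polynomial.X ^ 2))) (n : ℕ) :
    ∑ a ∈ s n, Polynomial.X ^ f n a = flagEulerian α n := by
  induction n with
  | zero => exact h_zero
  | succ n ih =>
    rw [h_succ, flagEulerian, ← ih, Polynomial.derivative_sum, mul_sum, mul_sum, ← sum_add_distrib]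
    refine sum_congr rfl fun a _ => ?_
    rw [mul_right_comm Polynomial.X, X_mul_derivative_X_pow]
    ring

end FlagEulerian

section FlagSum

/-- The weight of the index `i` in a flag statistic: `a` at the index `0` and `2` elsewhere. -/
def flagWeight (a i : ℕ) : ℕ :=
  if i = 0 then a else 2

/-- The sum of `e 0, …, e (N - 1)` in which `e 0` has weight `a` and the other terms have weight
`2`. Applied to the descent or ascent-plateau indicator of a word starting with the letter `0`,
it is the flag statistic for `a = 1` and twice the unflagged statistic for `a = 0`. -/
def flagSum (a N : ℕ) (e : ℕ → ℕ) : ℕ :=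
  ∑ i ∈ range N, flagWeight a i * e i

theorem flagSum_succ (a N : ℕ) (e : ℕ → ℕ) :
    flagSum a (N + 1) e = a * e 0 + 2 * ∑ i ∈ Icc 1 N, e i := by
  rw [flagSum, range_eq_Ico, sum_eq_sum_Ico_succ_bot N.succ_pos, Nat.succ_eq_add_one,
    Ico_add_one_right_eq_Icc, mul_sum]
  refine congrArg₂ _ (by simp [flagWeight]) (sum_congr rfl fun i hi => ?_)
  rw [flagWeight, if_neg (by have := mem_Icc.1 hi; omega)]

theorem sum_range_splice {M : Type*} [AddCommMonoid M] {f g : ℕ → M} {p l m : ℕ}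
    (hlt : ∀ i < p, g i = f i) (hge : ∀ i, g (p + m + i) = f (p + l + i)) (r : ℕ) :
    ∑ i ∈ range (p + m + r), g i + ∑ j ∈ range l, f (p + j) =
      ∑ i ∈ range (p + l + r), f i + ∑ j ∈ range m, g (p + j) := by
  simp only [sum_range_add, hge, sum_congr rfl fun i hi => hlt i (mem_range.1 hi)]
  abel

theorem flagSum_splice (a : ℕ) {e e' : ℕ → ℕ} {p l m : ℕ} (hl : 0 < p + l) (hm : 0 < p + m)
    (hlt : ∀ i < p, e' i = e i) (hge : ∀ i, e' (p + m + i) = e (p + l + i)) (r : ℕ) :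
    flagSum a (p + m + r) e' + ∑ j ∈ range l, flagWeight a (p + j) * e (p + j) =
      flagSum a (p + l + r) e + ∑ j ∈ range m, flagWeight a (p + j) * e' (p + j) := by
  refine sum_range_splice (f := fun i => flagWeight a i * e i)
    (g := fun i => flagWeight a i * e' i) (fun i hi => by rw [hlt i hi]) (fun i => ?_) r
  simp only [hge, flagWeight, show p + m + i ≠ 0 by omega, show p + l + i ≠ 0 by omega]

variable {R : Type*} [CommRing R]

theorem pow_eq_of_add_mul_eq (x : R) {F F' g c e : ℕ} (he : e ≤ 1) (hc : c ≤ g)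
    (h : F' + c * e = F + g) : x ^ F' = x ^ F * (x ^ g + e * (x ^ (g - c) - x ^ g)) := by
  interval_cases e
  · obtain rfl : F' = F + g := by omega
    simp [pow_add]
  · obtain rfl : F' = F + (g - c) := by omega
    simp [pow_add]

theorem pow_eq_of_add_mul_add_mul_eq (x : R) {F F' g c d e k : ℕ} (hek : e + k ≤ 1) (hc : c ≤ g)
    (hd : d ≤ g) (h : F' + c * e + d * k = F + g) :
    x ^ F' = x ^ F * (x ^ g + e * (x ^ (g - c) - x ^ g) + k * (x ^ (g - d) - x ^ g)) := by
  obtain rfl | rfl : e = 0 ∨ k = 0 := by omega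
  · simpa using pow_eq_of_add_mul_eq x (by omega) hd (by simpa using h)
  · simpa using pow_eq_of_add_mul_eq x (by omega) hc (by simpa using h)

theorem flagWeight_le_two {a : ℕ} (ha : a ≤ 2) (i : ℕ) : flagWeight a i ≤ 2 := by
  unfold flagWeight; split_ifs <;> omega

theorem sum_pow_flagWeight (x : R) (a N : ℕ) :
    ∑ i ∈ range (N + 1), x ^ flagWeight a i = x ^ a + N * x ^ 2 := by
  simp [sum_range_succ', flagWeight, add_comm]

/-- Every indicator of weight `c` is destroyed by exactly two insertions, of which one creates an
indicator of weight `c` and the other one of weight `2`. -/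
theorem sum_mul_pow_flagWeight (x : R) {a : ℕ} (ha : a ≤ 2) (N : ℕ) (e : ℕ → ℕ) :
    ∑ i ∈ range N, (e i : R) *
        ((1 - x ^ flagWeight a i) + (x ^ (2 - flagWeight a i) - x ^ 2)) =
      flagSum a N e * (1 - x ^ 2) := by
  rw [flagSum, Nat.cast_sum, sum_mul]
  refine sum_congr rfl fun i _ => ?_
  have hc := flagWeight_le_two ha i
  interval_cases flagWeight a i <;> push_cast <;> ring

end FlagSum

section Insertion

variable {α : Type*}

/-- The word `w` with the letter `y` inserted in front of position `p`. -/
def insertAt (p : ℕ) (y : α) (w : ℕ → α) (i : ℕ) : α :=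
  if i < p then w i else if i = p then y else w (i - 1)

theorem insertAt_of_lt {p i : ℕ} (h : i < p) (y : α) (w : ℕ → α) : insertAt p y w i = w i :=
  if_pos h

theorem insertAt_self (p : ℕ) (y : α) (w : ℕ → α) : insertAt p y w p = y := by
  simp [insertAt]

theorem insertAt_add_one {p i : ℕ} (h : p ≤ i) (y : α) (w : ℕ → α) :
    insertAt p y w (i + 1) = w i := by
  simp [insertAt, show ¬ i + 1 < p by omega, show i + 1 ≠ p by omega]

/-- The word `w` with two copies of the letter `y` inserted in front of position `p`. -/
def insertPair (p : ℕ) (y : α) (w : ℕ → α) : ℕ → α :=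
  insertAt p y (insertAt p y w)

theorem insertPair_of_lt {p i : ℕ} (h : i < p) (y : α) (w : ℕ → α) : insertPair p y w i = w i := by
  rw [insertPair, insertAt_of_lt h, insertAt_of_lt h]

theorem insertPair_self (p : ℕ) (y : α) (w : ℕ → α) : insertPair p y w p = y :=
  insertAt_self p y _

theorem insertPair_add_one (p : ℕ) (y : α) (w : ℕ → α) : insertPair p y w (p + 1) = y := by
  rw [insertPair, insertAt_add_one le_rfl, insertAt_self]

theorem insertPair_add_two {p i : ℕ} (h : p ≤ i) (y : α) (w : ℕ → α) :
    insertPair p y w (i + 2) = w i := by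
  rw [insertPair, insertAt_add_one (by omega), insertAt_add_one h]

end Insertion


section Descents

variable {α : Type*} [LinearOrder α]

/-- Indicator of a descent of the word `w` at the positions `i, i + 1`. -/
def descentInd (w : ℕ → α) (i : ℕ) : ℕ :=
  if w (i + 1) < w i then 1 else 0

theorem descentInd_le_one (w : ℕ → α) (i : ℕ) : descentInd w i ≤ 1 := by
  unfold descentInd; split_ifs <;> omega

theorem descentInd_insertAt_of_lt {p i : ℕ} (h : i + 1 < p) (y : α) (w : ℕ → α) :
    descentInd (insertAt p y w) i = descentInd w i := by
  simp only [descentInd, insertAt_of_lt h, insertAt_of_lt (Nat.lt_of_succ_lt h)]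

theorem descentInd_insertAt_add_one {p i : ℕ} (h : p ≤ i) (y : α) (w : ℕ → α) :
    descentInd (insertAt p y w) (i + 1) = descentInd w i := by
  simp only [descentInd, insertAt_add_one h, insertAt_add_one (Nat.le_succ_of_le h)]

theorem descentInd_insertAt_before (p : ℕ) (y : α) (w : ℕ → α) :
    descentInd (insertAt (p + 1) y w) p = if y < w p then 1 else 0 := by
  simp only [descentInd, insertAt_self, insertAt_of_lt p.lt_succ_self]

theorem descentInd_insertAt_self (p : ℕ) (y : α) (w : ℕ → α) :
    descentInd (insertAt p y w) p = if w p < y then 1 else 0 := by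
  simp only [descentInd, insertAt_self, insertAt_add_one le_rfl]

theorem flagSum_descentInd_insertAt (a : ℕ) {p N : ℕ} (hp : p < N) (y : α) (w : ℕ → α) :
    flagSum a (N + 1) (descentInd (insertAt (p + 1) y w)) + flagWeight a p * descentInd w p =
      flagSum a N (descentInd w) + (flagWeight a p * (if y < w p then 1 else 0) +
        2 * if w (p + 1) < y then 1 else 0) := by
  obtain ⟨r, rfl⟩ := Nat.exists_eq_add_of_le hp
  have h := flagSum_splice a (e := descentInd w) (e' := descentInd (insertAt (p + 1) y w))
    (p := p) (l := 1) (m := 2) (by omega) (by omega)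
    (fun i hi => descentInd_insertAt_of_lt (by omega) y w)
    (fun i => by
      rw [show p + 2 + i = p + 1 + i + 1 by ring]
      exact descentInd_insertAt_add_one (by omega) y w) r
  simp only [sum_range_succ, sum_range_zero, zero_add, add_zero, descentInd_insertAt_before,
    descentInd_insertAt_self, show flagWeight a (p + 1) = 2 from rfl] at h
  rwa [Nat.succ_eq_add_one, show p + 1 + r + 1 = p + 2 + r by ring]

theorem flagSum_descentInd_insertAt_end (a N : ℕ) (y : α) (w : ℕ → α) :
    flagSum a (N + 1) (descentInd (insertAt (N + 1) y w)) =
      flagSum a N (descentInd w) + flagWeight a N * if y < w N then 1 else 0 := by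
  rw [flagSum, flagSum, sum_range_succ, descentInd_insertAt_before]
  congr 1
  refine sum_congr rfl fun i hi => ?_
  rw [descentInd_insertAt_of_lt (by simpa using hi)]

variable {R : Type*} [CommRing R]

theorem sum_pow_flagSum_descentInd_insertAt_bot (x : R) (a N : ℕ) {m : α} {w : ℕ → α}
    (hm : ∀ i, m < w i) :
    ∑ p ∈ range (N + 1), x ^ flagSum a (N + 1) (descentInd (insertAt (p + 1) m w)) =
      x ^ flagSum a N (descentInd w) * (x ^ a + N * x ^ 2 +
        ∑ i ∈ range N, (descentInd w i : R) * (1 - x ^ flagWeight a i)) := by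
  have h_lt (p) (hp : p ∈ range N) := pow_eq_of_add_mul_eq x (descentInd_le_one w p) le_rfl
    (by simpa [hm, (hm _).not_gt] using flagSum_descentInd_insertAt a (mem_range.1 hp) m w)
  rw [← sum_pow_flagWeight, sum_range_succ, sum_range_succ, sum_congr rfl h_lt,
    flagSum_descentInd_insertAt_end, if_pos (hm N), pow_add]
  simp only [← mul_sum, sum_add_distrib, tsub_self, pow_zero, mul_one]
  ring

theorem sum_pow_flagSum_descentInd_insertAt_top (x : R) {a : ℕ} (ha : a ≤ 2) (N : ℕ) {M : α}
    {w : ℕ → α} (hM : ∀ i, w i < M) :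
    ∑ p ∈ range (N + 1), x ^ flagSum a (N + 1) (descentInd (insertAt (p + 1) M w)) =
      x ^ flagSum a N (descentInd w) * (1 + N * x ^ 2 +
        ∑ i ∈ range N, (descentInd w i : R) * (x ^ (2 - flagWeight a i) - x ^ 2)) := by
  have h_lt (p) (hp : p ∈ range N) := pow_eq_of_add_mul_eq x (descentInd_le_one w p)
    (flagWeight_le_two ha p)
    (by simpa [hM, (hM _).not_gt] using flagSum_descentInd_insertAt a (mem_range.1 hp) M w)
  rw [sum_range_succ, sum_congr rfl h_lt, flagSum_descentInd_insertAt_end, if_neg (hM N).not_gt]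
  simp only [← mul_sum, sum_add_distrib, sum_const, card_range, nsmul_eq_mul, mul_zero, add_zero]
  ring

theorem sum_pow_flagSum_descentInd_insertAt (x : R) {a : ℕ} (ha : a ≤ 2) (N : ℕ) {m M : α}
    {w : ℕ → α} (hm : ∀ i, m < w i) (hM : ∀ i, w i < M) :
    ∑ p ∈ range (N + 1), (x ^ flagSum a (N + 1) (descentInd (insertAt (p + 1) m w)) +
        x ^ flagSum a (N + 1) (descentInd (insertAt (p + 1) M w))) =
      x ^ flagSum a N (descentInd w) * (x ^ a + 1 + 2 * N * x ^ 2 +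
        flagSum a N (descentInd w) * (1 - x ^ 2)) := by
  rw [sum_add_distrib, sum_pow_flagSum_descentInd_insertAt_bot x a N hm,
    sum_pow_flagSum_descentInd_insertAt_top x ha N hM, ← sum_mul_pow_flagWeight x ha]
  simp only [mul_add, sum_add_distrib]
  ring

end Descents

section AscentPlateaus

variable {α : Type*} [LinearOrder α]

/-- Indicator of an ascent-plateau of the word `w` at the positions `i, i + 1, i + 2`. It is indexed
by the position of the smaller letter, so that `apQ` counts it at the index `i + 1`. -/
def ascPlateauInd (w : ℕ → α) (i : ℕ) : ℕ :=
  if w i < w (i + 1) ∧ w (i + 1) = w (i + 2) then 1 else 0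

theorem ascPlateauInd_le_one (w : ℕ → α) (i : ℕ) : ascPlateauInd w i ≤ 1 := by
  unfold ascPlateauInd; split_ifs <;> omega

theorem ascPlateauInd_succ_add_ascPlateauInd_le_one (w : ℕ → α) (i : ℕ) :
    ascPlateauInd w (i + 1) + ascPlateauInd w i ≤ 1 := by
  unfold ascPlateauInd
  split_ifs with h h' <;> first | omega | exact absurd h'.2 h.1.ne

theorem ascPlateauInd_insertPair_of_lt {p i : ℕ} (h : i + 2 < p) (y : α) (w : ℕ → α) :
    ascPlateauInd (insertPair p y w) i = ascPlateauInd w i := by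
  simp only [ascPlateauInd, insertPair_of_lt h, insertPair_of_lt (show i + 1 < p by omega),
    insertPair_of_lt (show i < p by omega)]

theorem ascPlateauInd_insertPair_add_two {p i : ℕ} (h : p ≤ i) (y : α) (w : ℕ → α) :
    ascPlateauInd (insertPair p y w) (i + 2) = ascPlateauInd w i := by
  simp only [ascPlateauInd, insertPair_add_two h, add_right_comm i 2,
    insertPair_add_two (show p ≤ i + 1 by omega), insertPair_add_two (show p ≤ i + 2 by omega)]

theorem ascPlateauInd_insertPair_self (p : ℕ) (y : α) (w : ℕ → α) :
    ascPlateauInd (insertPair p y w) p = 0 := by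
  simp [ascPlateauInd, insertPair_self, insertPair_add_one]

theorem ascPlateauInd_insertPair_add_one {p : ℕ} {M : α} {w : ℕ → α} (h : w p ≤ M) :
    ascPlateauInd (insertPair p M w) (p + 1) = 0 := by
  simp [ascPlateauInd, insertPair_add_one, insertPair_add_two, h.not_gt]

theorem ascPlateauInd_insertPair_succ {p : ℕ} {M : α} {w : ℕ → α} (h : w p < M) :
    ascPlateauInd (insertPair (p + 1) M w) p = 1 := by
  simp [ascPlateauInd, insertPair_self, insertPair_add_one, insertPair_of_lt p.lt_succ_self, h]

theorem ascPlateauInd_insertPair_succ_succ {p : ℕ} {M : α} {w : ℕ → α} (h : w (p + 1) ≠ M) :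
    ascPlateauInd (insertPair (p + 2) M w) p = 0 := by
  simp [ascPlateauInd, insertPair_self, insertPair_of_lt (p + 1).lt_succ_self, h]

theorem flagSum_ascPlateauInd_insertPair_one (a N : ℕ) {M : α} {w : ℕ → α} (hM : ∀ i, w i < M) :
    flagSum a (N + 3) (ascPlateauInd (insertPair 1 M w)) + a * ascPlateauInd w 0 =
      flagSum a (N + 1) (ascPlateauInd w) + a := by
  have h := flagSum_splice a (e := ascPlateauInd w) (e' := ascPlateauInd (insertPair 1 M w))
    (p := 0) (l := 1) (m := 3) (by omega) (by omega) (fun i hi => absurd hi i.not_lt_zero)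
    (fun i => by
      rw [show 0 + 3 + i = 0 + 1 + i + 2 by ring]
      exact ascPlateauInd_insertPair_add_two (by omega) M w) N
  simpa [sum_range_succ, ascPlateauInd_insertPair_succ (hM 0), ascPlateauInd_insertPair_self,
    ascPlateauInd_insertPair_add_one (hM 1).le, flagWeight, add_comm] using h

theorem flagSum_ascPlateauInd_insertPair_add_two (a : ℕ) {q N : ℕ} (hq : q < N) {M : α}
    {w : ℕ → α} (hM : ∀ i, w i < M) :
    flagSum a (N + 3) (ascPlateauInd (insertPair (q + 2) M w)) + 2 * ascPlateauInd w (q + 1) +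
        flagWeight a q * ascPlateauInd w q =
      flagSum a (N + 1) (ascPlateauInd w) + 2 := by
  obtain ⟨r, rfl⟩ := Nat.exists_eq_add_of_le hq
  have h := flagSum_splice a (e := ascPlateauInd w) (e' := ascPlateauInd (insertPair (q + 2) M w))
    (p := q) (l := 2) (m := 4) (by omega) (by omega)
    (fun i hi => ascPlateauInd_insertPair_of_lt (by omega) M w)
    (fun i => by
      rw [show q + 4 + i = q + 2 + i + 2 by ring]
      exact ascPlateauInd_insertPair_add_two (by omega) M w) r
  simp only [sum_range_succ, sum_range_zero, zero_add, add_zero,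
    ascPlateauInd_insertPair_succ_succ (hM _).ne, ascPlateauInd_insertPair_succ (hM _),
    ascPlateauInd_insertPair_self, ascPlateauInd_insertPair_add_one (hM _).le,
    show flagWeight a (q + 1) = 2 from rfl, mul_zero, mul_one] at h
  rw [Nat.succ_eq_add_one, show q + 1 + r + 3 = q + 4 + r by ring,
    show q + 1 + r + 1 = q + 2 + r by ring, ← h]
  ring

variable {R : Type*} [CommRing R]

theorem sum_pow_flagSum_ascPlateauInd_insertPair (x : R) {a : ℕ} (ha : a ≤ 2) {N : ℕ} {M : α}
    {w : ℕ → α} (hM : ∀ i, w i < M) (hN : ascPlateauInd w N = 0) :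
    ∑ p ∈ range (N + 1), x ^ flagSum a (N + 3) (ascPlateauInd (insertPair (p + 1) M w)) =
      x ^ flagSum a (N + 1) (ascPlateauInd w) * (x ^ a + N * x ^ 2 +
        flagSum a (N + 1) (ascPlateauInd w) * (1 - x ^ 2)) := by
  have h_zero := pow_eq_of_add_mul_eq x (ascPlateauInd_le_one w 0) le_rfl
    (flagSum_ascPlateauInd_insertPair_one a N hM)
  have h_succ (q) (hq : q ∈ range N) := pow_eq_of_add_mul_add_mul_eq x
    (ascPlateauInd_succ_add_ascPlateauInd_le_one w q) le_rfl (flagWeight_le_two ha q)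
    (flagSum_ascPlateauInd_insertPair_add_two a (mem_range.1 hq) hM)
  have h_weight : (flagSum a (N + 1) (ascPlateauInd w) : R) * (1 - x ^ 2) =
      ∑ q ∈ range N, (ascPlateauInd w (q + 1) : R) * (1 - x ^ 2) +
        (ascPlateauInd w 0 : R) * (1 - x ^ a) +
        ∑ q ∈ range N, (ascPlateauInd w q : R) * (x ^ (2 - flagWeight a q) - x ^ 2) := by
    rw [← sum_mul_pow_flagWeight x ha]
    simp only [mul_add, sum_add_distrib]
    rw [sum_range_succ', sum_range_succ _ N, hN]
    simp [flagWeight]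
  rw [sum_range_succ', h_zero, sum_congr rfl h_succ, h_weight]
  simp only [← mul_sum, sum_add_distrib, sum_const, card_range, nsmul_eq_mul, tsub_self, pow_zero]
  ring

end AscentPlateaus

section ZeroExtend

variable {α : Type*} [Zero α] {n : ℕ}

/-- The word `0, f 0, …, f (n - 1), 0, 0, …`: the common shape of `sval` and `bval`. -/
def zeroExtend (f : Fin n → α) (i : ℕ) : α :=
  if h : 1 ≤ i ∧ i ≤ n then f ⟨i - 1, by omega⟩ else 0

theorem zeroExtend_zero (f : Fin n → α) : zeroExtend f 0 = 0 :=
  dif_neg (by omega)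

theorem zeroExtend_of_lt {i : ℕ} (h : n < i) (f : Fin n → α) : zeroExtend f i = 0 :=
  dif_neg (by omega)

theorem zeroExtend_val_add_one (f : Fin n → α) (j : Fin n) : zeroExtend f (j + 1) = f j :=
  dif_pos (by omega)

theorem forall_zeroExtend {P : α → Prop} (h_zero : P 0) {f : Fin n → α} (h : ∀ j, P (f j))
    (i : ℕ) : P (zeroExtend f i) := by
  unfold zeroExtend
  split_ifs
  exacts [h _, h_zero]

theorem zeroExtend_eq_insertAt (p : Fin (n + 1)) (f : Fin (n + 1) → α) :
    zeroExtend f = insertAt (p + 1) (f p) (zeroExtend (p.removeNth f)) := by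
  funext i
  rcases lt_or_ge (n + 1) i with hi | hi
  · obtain ⟨i, rfl⟩ := Nat.exists_eq_add_of_le' (Nat.one_le_of_lt hi)
    rw [insertAt_add_one (by omega), zeroExtend_of_lt hi, zeroExtend_of_lt (by omega)]
  obtain rfl | ⟨j, rfl⟩ : i = 0 ∨ ∃ j : Fin (n + 1), i = j + 1 := by
    cases i with
    | zero => exact .inl rfl
    | succ i => exact .inr ⟨⟨i, by omega⟩, rfl⟩
  · rw [insertAt_of_lt (Nat.succ_pos _), zeroExtend_zero, zeroExtend_zero]
  obtain rfl | ⟨k, rfl⟩ := p.eq_self_or_eq_succAbove j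
  · rw [zeroExtend_val_add_one, insertAt_self]
  rw [zeroExtend_val_add_one]
  rcases lt_or_ge k.castSucc p with h | h
  · rw [Fin.succAbove_of_castSucc_lt _ _ h,
      insertAt_of_lt (by simpa [Fin.lt_def] using h), Fin.val_castSucc, zeroExtend_val_add_one,
      Fin.removeNth, Fin.succAbove_of_castSucc_lt _ _ h]
  · rw [Fin.succAbove_of_le_castSucc _ _ h,
      insertAt_add_one (by simpa [Fin.le_def] using h), Fin.val_succ, zeroExtend_val_add_one,
      Fin.removeNth, Fin.succAbove_of_le_castSucc _ _ h]

end ZeroExtend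

section StirlingPermutations

variable {n : ℕ}

/-- The word `σ` with two copies of the letter `n + 1` inserted in front of position `p`. -/
def insertMaxPair (p : Fin (2 * n + 1)) (σ : Fin (2 * n) → Fin (n + 1)) :
    Fin (2 * (n + 1)) → Fin (n + 1 + 1) :=
  p.castSucc.insertNth (α := fun _ => Fin (n + 1 + 1)) (Fin.last (n + 1))
    (p.insertNth (α := fun _ => Fin (n + 1 + 1)) (Fin.last (n + 1)) fun i => (σ i).castSucc)

/-- The position in `insertMaxPair p σ` of the letter at position `i` of `σ`. -/
def skipPair (p : Fin (2 * n + 1)) (i : Fin (2 * n)) : Fin (2 * (n + 1)) :=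
  p.castSucc.succAbove (p.succAbove i)

theorem skipPair_strictMono (p : Fin (2 * n + 1)) : StrictMono (skipPair p) :=
  (Fin.strictMono_succAbove _).comp (Fin.strictMono_succAbove _)

theorem eq_castSucc_or_eq_succ_or_eq_skipPair (p : Fin (2 * n + 1)) (i : Fin (2 * (n + 1))) :
    (i = p.castSucc ∨ i = p.succ) ∨ ∃ j, i = skipPair p j := by
  obtain rfl | ⟨i, rfl⟩ := Fin.eq_self_or_eq_succAbove p.castSucc i
  · exact .inl (.inl rfl)
  obtain rfl | ⟨i, rfl⟩ := Fin.eq_self_or_eq_succAbove p i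
  · exact .inl (.inr (Fin.succAbove_castSucc_self _))
  · exact .inr ⟨i, rfl⟩

theorem insertMaxPair_skipPair (p : Fin (2 * n + 1)) (σ : Fin (2 * n) → Fin (n + 1))
    (i : Fin (2 * n)) : insertMaxPair p σ (skipPair p i) = (σ i).castSucc := by
  rw [insertMaxPair, skipPair, Fin.insertNth_apply_succAbove, Fin.insertNth_apply_succAbove]

theorem insertMaxPair_castSucc (p : Fin (2 * n + 1)) (σ : Fin (2 * n) → Fin (n + 1)) :
    insertMaxPair p σ p.castSucc = Fin.last (n + 1) :=
  Fin.insertNth_apply_same _ _ _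

theorem insertMaxPair_succ (p : Fin (2 * n + 1)) (σ : Fin (2 * n) → Fin (n + 1)) :
    insertMaxPair p σ p.succ = Fin.last (n + 1) := by
  rw [← Fin.succAbove_castSucc_self, insertMaxPair, Fin.insertNth_apply_succAbove,
    Fin.insertNth_apply_same]

theorem insertMaxPair_eq_last_iff {p : Fin (2 * n + 1)} {σ : Fin (2 * n) → Fin (n + 1)}
    {i : Fin (2 * (n + 1))} :
    insertMaxPair p σ i = Fin.last (n + 1) ↔ i = p.castSucc ∨ i = p.succ := by
  refine ⟨fun h => (eq_castSucc_or_eq_succ_or_eq_skipPair p i).resolve_right ?_, ?_⟩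
  · rintro ⟨j, rfl⟩
    exact Fin.castSucc_ne_last _ ((insertMaxPair_skipPair p σ j).symm.trans h)
  · rintro (rfl | rfl)
    exacts [insertMaxPair_castSucc p σ, insertMaxPair_succ p σ]

theorem insertMaxPair_injective2 :
    Function.Injective2 (insertMaxPair : Fin (2 * n + 1) → (Fin (2 * n) → Fin (n + 1)) → _) := by
  intro p q σ τ h
  obtain rfl : p = q := by
    have hp := insertMaxPair_eq_last_iff.1 (h ▸ insertMaxPair_castSucc p σ)
    have hq := insertMaxPair_eq_last_iff.1 (h.symm ▸ insertMaxPair_castSucc q τ)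
    simp only [Fin.ext_iff, Fin.val_castSucc, Fin.val_succ] at hp hq
    omega
  refine ⟨rfl, funext fun i => Fin.castSucc_injective _ ?_⟩
  rw [← insertMaxPair_skipPair p, h, insertMaxPair_skipPair]

theorem card_filter_insertMaxPair (p : Fin (2 * n + 1)) (σ : Fin (2 * n) → Fin (n + 1))
    (v : Fin (n + 1 + 1)) :
    #{i | insertMaxPair p σ i = v} =
      (if Fin.last (n + 1) = v then 2 else 0) + #{i | (σ i).castSucc = v} := by
  simp only [card_filter]
  refine (Fin.sum_univ_succAbove (n := 2 * n + 1) _ p.castSucc).trans ?_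
  rw [Fin.sum_univ_succAbove _ p, insertMaxPair_castSucc, Fin.succAbove_castSucc_self,
    insertMaxPair_succ, ← add_assoc]
  congr 1
  · split_ifs <;> rfl
  · exact sum_congr rfl fun i _ => by rw [← insertMaxPair_skipPair p, skipPair]

theorem insertMaxPair_mem_stirlingSet_iff {p : Fin (2 * n + 1)} {σ : Fin (2 * n) → Fin (n + 1)} :
    insertMaxPair p σ ∈ StirlingSet (n + 1) ↔ σ ∈ StirlingSet n := by
  simp only [StirlingSet, mem_filter_univ]
  refine and_congr ?_ ⟨fun h i j k hij hjk hik => ?_, fun h i j k hij hjk hik => ?_⟩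
  · simp [Fin.forall_fin_succ' (n := n + 1), card_filter_insertMaxPair,
      fun v : Fin (n + 1) => (Fin.castSucc_ne_last v).symm]
  · have := h _ _ _ (skipPair_strictMono p hij) (skipPair_strictMono p hjk)
      (by rw [insertMaxPair_skipPair, insertMaxPair_skipPair, hik])
    simpa only [insertMaxPair_skipPair, Fin.castSucc_lt_castSucc_iff] using this
  · obtain hi | ⟨i, rfl⟩ := eq_castSucc_or_eq_succ_or_eq_skipPair p i
    · have hk := insertMaxPair_eq_last_iff.1 (hik ▸ insertMaxPair_eq_last_iff.2 hi)
      simp only [Fin.lt_def, Fin.ext_iff, Fin.val_castSucc, Fin.val_succ] at hi hk hij hjk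
      omega
    obtain hk | ⟨k, rfl⟩ := eq_castSucc_or_eq_succ_or_eq_skipPair p k
    · rw [insertMaxPair_eq_last_iff.2 hk, insertMaxPair_skipPair] at hik
      exact absurd hik (Fin.castSucc_ne_last _)
    obtain hj | ⟨j, rfl⟩ := eq_castSucc_or_eq_succ_or_eq_skipPair p j
    · rw [insertMaxPair_eq_last_iff.2 hj, insertMaxPair_skipPair]
      exact Fin.castSucc_lt_last _
    rw [insertMaxPair_skipPair, insertMaxPair_skipPair] at hik ⊢
    exact Fin.castSucc_lt_castSucc_iff.2 (h i j k ((skipPair_strictMono p).lt_iff_lt.1 hij)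
      ((skipPair_strictMono p).lt_iff_lt.1 hjk) (Fin.castSucc_injective _ hik))

theorem exists_eq_last_iff_of_mem_stirlingSet {τ : Fin (2 * (n + 1)) → Fin (n + 1 + 1)}
    (hτ : τ ∈ StirlingSet (n + 1)) :
    ∃ p : Fin (2 * n + 1), ∀ i, τ i = Fin.last (n + 1) ↔ i = p.castSucc ∨ i = p.succ := by
  obtain ⟨hcard, hnest⟩ := mem_filter_univ _ |>.1 hτ
  obtain ⟨a, b, hab, hset⟩ := card_eq_two.1 (hcard (Fin.last _) (by simp))
  wlog hlt : a < b generalizing a b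
  · exact this b a hab.symm (by rw [hset, pair_comm]) (lt_of_le_of_ne (not_lt.1 hlt) hab.symm)
  have hlast (i) : τ i = Fin.last (n + 1) ↔ i = a ∨ i = b := by
    simpa using Finset.ext_iff.1 hset i
  have hsucc : (b : ℕ) = a + 1 := by
    by_contra hne
    have hgt := hnest a ⟨a + 1, by omega⟩ b (by simp [Fin.lt_def])
      (by simp only [Fin.lt_def] at hlt ⊢; omega)
      (((hlast a).2 (.inl rfl)).trans ((hlast b).2 (.inr rfl)).symm)
    exact (Fin.le_last _).not_gt ((hlast a).2 (.inl rfl) ▸ hgt)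
  refine ⟨⟨a, by omega⟩, fun i => (hlast i).trans ?_⟩
  simp [Fin.ext_iff, hsucc]

theorem exists_insertMaxPair_eq {τ : Fin (2 * (n + 1)) → Fin (n + 1 + 1)}
    (hτ : τ ∈ StirlingSet (n + 1)) : ∃ p σ, insertMaxPair (n := n) p σ = τ := by
  obtain ⟨p, hp⟩ := exists_eq_last_iff_of_mem_stirlingSet hτ
  have hne (i : Fin (2 * n)) : τ (skipPair p i) ≠ Fin.last (n + 1) := by
    rw [Ne, hp, ← insertMaxPair_eq_last_iff (σ := 0), insertMaxPair_skipPair]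
    exact Fin.castSucc_ne_last _
  refine ⟨p, fun i => (τ (skipPair p i)).castPred (hne i), funext fun i => ?_⟩
  obtain hi | ⟨j, rfl⟩ := eq_castSucc_or_eq_succ_or_eq_skipPair p i
  · rw [insertMaxPair_eq_last_iff.2 hi, (hp i).2 hi]
  · rw [insertMaxPair_skipPair, Fin.castSucc_castPred]

theorem sum_stirlingSet_succ {M : Type*} [AddCommMonoid M]
    (f : (Fin (2 * (n + 1)) → Fin (n + 1 + 1)) → M) :
    ∑ τ ∈ StirlingSet (n + 1), f τ = ∑ σ ∈ StirlingSet n, ∑ p, f (insertMaxPair p σ) := by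
  rw [← sum_product' (StirlingSet n) univ fun σ p => f (insertMaxPair p σ)]
  symm
  refine sum_nbij (fun a => insertMaxPair a.2 a.1) (fun a ha => ?_) (fun a _ b _ h => ?_)
    (fun τ hτ => ?_) fun _ _ => rfl
  · exact insertMaxPair_mem_stirlingSet_iff.2 (mem_product.1 ha).1
  · obtain ⟨hp, hσ⟩ := insertMaxPair_injective2 h
    exact Prod.ext hσ hp
  · obtain ⟨p, σ, rfl⟩ := exists_insertMaxPair_eq (mem_coe.1 hτ)
    exact ⟨(σ, p), by simpa [insertMaxPair_mem_stirlingSet_iff] using hτ, rfl⟩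

theorem sval_eq_zeroExtend (σ : Fin (2 * n) → Fin (n + 1)) :
    sval σ = zeroExtend fun i => (σ i : ℕ) :=
  rfl

theorem sval_lt (σ : Fin (2 * n) → Fin (n + 1)) (i : ℕ) : sval σ i < n + 1 :=
  forall_zeroExtend (P := (· < n + 1)) n.succ_pos (fun j => (σ j).isLt) i

theorem sval_insertMaxPair (p : Fin (2 * n + 1)) (σ : Fin (2 * n) → Fin (n + 1)) :
    sval (insertMaxPair p σ) = insertPair (p + 1) (n + 1) (sval σ) := by
  have h_remove : (fun i => (insertMaxPair p σ (skipPair p i) : ℕ)) = fun i => (σ i : ℕ) :=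
    funext fun i => by rw [insertMaxPair_skipPair, Fin.val_castSucc]
  rw [sval_eq_zeroExtend, sval_eq_zeroExtend, insertPair, ← h_remove]
  refine (zeroExtend_eq_insertAt (n := 2 * n + 1) p.castSucc _).trans ?_
  rw [zeroExtend_eq_insertAt p, insertMaxPair_castSucc, Fin.removeNth,
    Fin.succAbove_castSucc_self, insertMaxPair_succ]
  rfl

theorem ascPlateauInd_sval_eq_zero (σ : Fin (2 * n) → Fin (n + 1)) {i : ℕ} (h : 2 * n ≤ i + 1) :
    ascPlateauInd (sval σ) i = 0 := by
  have h_zero : sval σ (i + 2) = 0 := by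
    rw [sval_eq_zeroExtend, zeroExtend_of_lt (by omega)]
  rw [ascPlateauInd, if_neg]
  omega

theorem apQ_eq_sum (σ : Fin (2 * n) → Fin (n + 1)) :
    apQ σ = ∑ i ∈ Icc 1 (2 * n), ascPlateauInd (sval σ) i := by
  have h_sub : Icc 1 (2 * n - 2) ⊆ Icc 1 (2 * n) := Icc_subset_Icc_right (by omega)
  rw [← sum_subset h_sub fun i h hi => ascPlateauInd_sval_eq_zero σ (by
    rw [mem_Icc] at h hi
    omega), apQ, card_filter]
  refine sum_nbij' (· - 1) (· + 1) ?_ ?_ ?_ ?_ fun i hi => ?_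
  · simp only [mem_Icc]
    omega
  · simp only [mem_Icc]
    omega
  · simp only [mem_Icc]
    omega
  · simp
  · obtain ⟨i, rfl⟩ := Nat.exists_eq_add_of_le' (one_le_two.trans (mem_Icc.1 hi).1)
    rfl

theorem flagSum_ascPlateauInd_sval (a : ℕ) (σ : Fin (2 * n) → Fin (n + 1)) :
    flagSum a (2 * n + 1) (ascPlateauInd (sval σ)) =
      a * ascPlateauInd (sval σ) 0 + 2 * apQ σ := by
  rw [flagSum_succ, apQ_eq_sum]

theorem ne_zero_of_mem_stirlingSet {σ : Fin (2 * n) → Fin (n + 1)} (hσ : σ ∈ StirlingSet n)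
    (i : Fin (2 * n)) : σ i ≠ 0 := by
  induction n with
  | zero => exact i.elim0
  | succ n ih =>
    obtain ⟨p, τ, rfl⟩ := exists_insertMaxPair_eq hσ
    obtain hi | ⟨j, rfl⟩ := eq_castSucc_or_eq_succ_or_eq_skipPair p i
    · rw [insertMaxPair_eq_last_iff.2 hi]
      exact Fin.last_pos.ne'
    · rw [insertMaxPair_skipPair, Fin.castSucc_ne_zero_iff]
      exact ih (insertMaxPair_mem_stirlingSet_iff.1 hσ) j

theorem fapQ_eq_flagSum {σ : Fin (2 * n) → Fin (n + 1)} (hσ : σ ∈ StirlingSet n) :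
    fapQ σ = flagSum 1 (2 * n + 1) (ascPlateauInd (sval σ)) := by
  rw [flagSum_ascPlateauInd_sval, one_mul, fapQ]
  rcases n.eq_zero_or_pos with rfl | hn
  · rw [if_neg (by omega), ascPlateauInd_sval_eq_zero σ (Nat.zero_le _), zero_add]
  have h_zero : sval σ 0 = 0 := by rw [sval_eq_zeroExtend, zeroExtend_zero]
  have h_pos : 0 < sval σ 1 := by
    rw [sval, dif_pos (by omega)]
    exact Fin.pos_iff_ne_zero.2 (ne_zero_of_mem_stirlingSet hσ _)
  simp only [ascPlateauInd, h_zero, h_pos, Nat.one_le_iff_ne_zero, hn.ne', true_and, ne_eq,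
    not_false_eq_true, zero_add]
  split_ifs <;> ring

theorem two_mul_apQ_eq_flagSum (σ : Fin (2 * n) → Fin (n + 1)) :
    2 * apQ σ = flagSum 0 (2 * n + 1) (ascPlateauInd (sval σ)) := by
  rw [flagSum_ascPlateauInd_sval, zero_mul, zero_add]

theorem sum_stirlingSet_X_pow_flagSum (R : Type*) [CommRing R] {a : ℕ} (ha : a ≤ 2) (n : ℕ) :
    ∑ σ ∈ StirlingSet n, (Polynomial.X : R[X]) ^ flagSum a (2 * n + 1) (ascPlateauInd (sval σ)) =
      flagEulerian (Polynomial.X ^ a) n := by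
  refine sum_X_pow_eq_flagEulerian StirlingSet
    (fun n σ => flagSum a (2 * n + 1) (ascPlateauInd (sval σ))) _ ?_ (fun n => ?_) n
  · simp [StirlingSet, flagSum, ascPlateauInd_sval_eq_zero]
  · rw [sum_stirlingSet_succ]
    refine sum_congr rfl fun σ _ => ?_
    have h := sum_pow_flagSum_ascPlateauInd_insertPair (Polynomial.X : R[X]) ha (sval_lt σ)
      (ascPlateauInd_sval_eq_zero σ (Nat.le_succ _))
    rw [sum_range] at h
    simp only [← sval_insertMaxPair] at h
    exact_mod_cast h

theorem sum_stirlingSet_X_pow_fapQ (R : Type*) [CommRing R] (n : ℕ) :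
    ∑ σ ∈ StirlingSet n, (Polynomial.X : R[X]) ^ fapQ σ = flagEulerian Polynomial.X n := by
  rw [sum_congr rfl fun σ hσ => by rw [fapQ_eq_flagSum hσ],
    sum_stirlingSet_X_pow_flagSum R one_le_two, pow_one]

theorem sum_stirlingSet_X_pow_two_mul_apQ (R : Type*) [CommRing R] (n : ℕ) :
    ∑ σ ∈ StirlingSet n, (Polynomial.X : R[X]) ^ (2 * apQ σ) = flagEulerian 1 n := by
  simpa only [two_mul_apQ_eq_flagSum, pow_zero] using
    sum_stirlingSet_X_pow_flagSum R (Nat.zero_le 2) n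

end StirlingPermutations

section SignedPermutations

variable {n : ℕ}

/-- The permutation whose one-line notation is that of `σ` with the maximal letter inserted in
front of position `p`. -/
def insertMax (p : Fin (n + 1)) (σ : Equiv.Perm (Fin n)) : Equiv.Perm (Fin (n + 1)) :=
  (finSuccEquiv' p).trans ((Equiv.optionCongr σ).trans finSuccEquivLast.symm)

theorem insertMax_self (p : Fin (n + 1)) (σ : Equiv.Perm (Fin n)) :
    insertMax p σ p = Fin.last n := by
  simp [insertMax]

theorem insertMax_succAbove (p : Fin (n + 1)) (σ : Equiv.Perm (Fin n)) (i : Fin n) :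
    insertMax p σ (p.succAbove i) = (σ i).castSucc := by
  simp [insertMax]

/-- The signed permutation `π` with the letter `n + 1`, negated if `b`, inserted in front of
position `p`. -/
def insertSignedMax (p : Fin (n + 1)) (b : Bool) (π : SignedPerm n) : SignedPerm (n + 1) :=
  (insertMax p π.1, p.insertNth (α := fun _ => Bool) b π.2)

theorem bijective_insertSignedMax : Function.Bijective
    fun a : SignedPerm n × Fin (n + 1) × Bool => insertSignedMax a.2.1 a.2.2 a.1 := by
  rw [Fintype.bijective_iff_injective_and_card]
  constructor
  · rintro ⟨⟨σ, s⟩, p, b⟩ ⟨⟨τ, t⟩, q, c⟩ h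
    obtain ⟨h_perm, h_sign⟩ := Prod.ext_iff.1 h
    dsimp only [insertSignedMax] at h_perm h_sign
    obtain rfl : p = q := (insertMax p σ).injective (by
      rw [insertMax_self, h_perm, insertMax_self])
    obtain rfl : σ = τ := Equiv.ext fun i => Fin.castSucc_injective _ (by
      rw [← insertMax_succAbove p, ← insertMax_succAbove p, h_perm])
    obtain ⟨rfl, rfl⟩ := Fin.insertNth_inj.1 h_sign
    rfl
  · simp only [Fintype.card_prod, Fintype.card_perm, Fintype.card_fin, Fintype.card_pi,
      Fintype.card_bool, prod_const, card_univ, Nat.factorial_succ]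
    ring

theorem sum_signedPerm_succ {M : Type*} [AddCommMonoid M] (f : SignedPerm (n + 1) → M) :
    ∑ ρ, f ρ = ∑ π : SignedPerm n, ∑ p, ∑ b, f (insertSignedMax p b π) := by
  rw [← bijective_insertSignedMax.sum_comp f, Fintype.sum_prod_type]
  simp_rw [Fintype.sum_prod_type]

/-- The letter `±(i + 1)` of value `i : Fin n` with the sign bit `b`. -/
def signedLetter (b : Bool) (i : Fin n) : ℤ :=
  if b then -((i : ℤ) + 1) else (i : ℤ) + 1

theorem bval_eq_zeroExtend (π : SignedPerm n) :
    bval π = zeroExtend fun i => signedLetter (π.2 i) (π.1 i) :=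
  rfl

theorem bval_zero (π : SignedPerm n) : bval π 0 = 0 := by
  rw [bval_eq_zeroExtend, zeroExtend_zero]

theorem neg_lt_signedLetter (b : Bool) (i : Fin n) : -((n : ℤ) + 1) < signedLetter b i := by
  unfold signedLetter
  split_ifs <;> omega

theorem signedLetter_lt (b : Bool) (i : Fin n) : signedLetter b i < (n : ℤ) + 1 := by
  unfold signedLetter
  split_ifs <;> omega

theorem neg_lt_bval (π : SignedPerm n) (i : ℕ) : -((n : ℤ) + 1) < bval π i :=
  forall_zeroExtend (P := (-((n : ℤ) + 1) < ·)) (by omega)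
    (f := fun i => signedLetter (π.2 i) (π.1 i)) (fun _ => neg_lt_signedLetter _ _) i

theorem bval_lt (π : SignedPerm n) (i : ℕ) : bval π i < (n : ℤ) + 1 :=
  forall_zeroExtend (P := (· < (n : ℤ) + 1)) (by omega)
    (f := fun i => signedLetter (π.2 i) (π.1 i)) (fun _ => signedLetter_lt _ _) i

theorem bval_insertSignedMax (p : Fin (n + 1)) (b : Bool) (π : SignedPerm n) :
    bval (insertSignedMax p b π) =
      insertAt (p + 1) (signedLetter b (Fin.last n)) (bval π) := by
  rw [bval_eq_zeroExtend, bval_eq_zeroExtend, zeroExtend_eq_insertAt p]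
  simp only [insertSignedMax, Fin.insertNth_apply_same, insertMax_self]
  congr 2
  funext i
  simp only [Fin.removeNth, Fin.insertNth_apply_succAbove, insertMax_succAbove]
  rfl

theorem fdes_eq_flagSum (π : SignedPerm n) : fdes π = flagSum 1 n (descentInd (bval π)) := by
  cases n with
  | zero => simp [fdes, desA, bval, flagSum]
  | succ n =>
    rw [flagSum_succ, one_mul, descentInd, zero_add, bval_zero, fdes, desA, card_filter,
      Nat.add_sub_cancel]
    simp only [descentInd]
    split_ifs <;> ring

theorem sum_signedPerm_X_pow_flagSum (R : Type*) [CommRing R] {a : ℕ} (ha : a ≤ 2) (n : ℕ) :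
    ∑ π : SignedPerm n, (Polynomial.X : R[X]) ^ flagSum a n (descentInd (bval π)) =
      flagEulerian (Polynomial.X ^ a + 1) n := by
  refine sum_X_pow_eq_flagEulerian (fun n => (univ : Finset (SignedPerm n)))
    (fun n π => flagSum a n (descentInd (bval π))) _ ?_ (fun n => ?_) n
  · simp [flagSum]
  · rw [sum_signedPerm_succ]
    refine sum_congr rfl fun π _ => ?_
    have h := sum_pow_flagSum_descentInd_insertAt (Polynomial.X : R[X]) ha n (neg_lt_bval π)
      (bval_lt π)
    rw [sum_range] at h
    simpa only [Fintype.sum_bool, bval_insertSignedMax, signedLetter, if_true, Bool.false_eq_true,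
      if_false, Fin.val_last] using h

theorem sum_signedPerm_X_pow_fdes (R : Type*) [CommRing R] (n : ℕ) :
    ∑ π : SignedPerm n, (Polynomial.X : R[X]) ^ fdes π = flagEulerian (Polynomial.X + 1) n := by
  simpa only [fdes_eq_flagSum, pow_one] using sum_signedPerm_X_pow_flagSum R one_le_two n

end SignedPermutations

theorem statement_6_general (R : Type*) [CommRing R] (n : ℕ) :
    (∑ π : SignedPerm n, (Polynomial.X : R[X]) ^ fdes π) =
      ∑ k ∈ range (n + 1), (n.choose k : R[X]) *
        (∑ σ ∈ StirlingSet k, (Polynomial.X : R[X]) ^ fapQ σ) *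
        (∑ σ ∈ StirlingSet (n - k), (Polynomial.X : R[X]) ^ (2 * apQ σ)) := by
  simp only [sum_signedPerm_X_pow_fdes, sum_stirlingSet_X_pow_fapQ,
    sum_stirlingSet_X_pow_two_mul_apQ, flagEulerian_add, mul_assoc]
  exact Nat.sum_antidiagonal_eq_sum_range_succ (fun i j => (n.choose i : R[X]) *
    (flagEulerian Polynomial.X i * flagEulerian 1 j)) n

theorem statement_6 (n : ℕ) :
    (∑ π : SignedPerm n, (Polynomial.X : Polynomial ℤ) ^ fdes π) =
      ∑ k ∈ Finset.range (n + 1), (n.choose k : Polynomial ℤ) *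
        (∑ σ ∈ StirlingSet k, (Polynomial.X : Polynomial ℤ) ^ fapQ σ) *
        (∑ σ ∈ StirlingSet (n - k), (Polynomial.X : Polynomial ℤ) ^ (2 * apQ σ)) := by
  exact statement_6_general ℤ n
end

section
/- For every n ≥ 1 and all i, j, k ≥ 0, the number of Stirling permutations σ ∈ Q_n with lap(σ) = i, dasc(σ) = j, dp(σ) = k equals the number of σ ∈ Q_n with lap(σ) = i, dasc(σ) = k, dp(σ) = j. Equivalently, the polynomial P_n(x,y,z) = Σ_{σ ∈ Q_n} x^{lap(σ)} y^{dasc(σ)} z^{dp(σ)} satisfies P_n(x,y,z) = P_n(x,z,y). -/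
open Finset MvPolynomial

/-!
Removing the two copies of the smallest letter `v` of a Stirling word leaves three Stirling words on
disjoint alphabets: the parts before, between and after the copies. Iterating, Stirling permutations
correspond to increasing ternary trees, each node carrying a letter. The neighbours of the first
occurrence of `v` depend only on which subtrees of its node are empty: the left neighbour is larger
than `v` unless the left subtree is empty, when it is smaller, and the right neighbour is larger
unless the middle subtree is empty, when it is the second copy of `v`. Second occurrences are never
preceded by a smaller letter nor followed by an equal one. Hence `lap`, `dasc` and `dp` count the
nodes whose left and middle subtrees are both empty, of which only the left one is empty, and of
which only the middle one is empty. Exchanging the left and the middle subtree of every node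
preserves the first number and swaps the other two.
-/

open scoped List

theorem ncard_sep_comp_of_bijOn {α β : Type*} {f : α → β} {s : Set α} {t : Set β}
    (h : Set.BijOn f s t) (p : β → Prop) : {x ∈ s | p (f x)}.ncard = {y ∈ t | p y}.ncard :=
  (h.inter_mapsTo (fun _ hx => hx) fun _ hx => hx.2).ncard_eq

section List

variable {α : Type*} {a b c : α} {u x y : List α}

theorem cons_sublist_of_cons_sublist_append (h : a :: u <+ x ++ y) (ha : a ∉ x) :
    a :: u <+ y := by
  induction x with
  | nil => exact h
  | cons d x ih => grind [List.cons_sublist_cons']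

theorem append_singleton_sublist_of_sublist_append (h : u ++ [a] <+ x ++ y) (ha : a ∉ y) :
    u ++ [a] <+ x := by
  rw [← List.reverse_sublist] at h ⊢
  simp only [List.reverse_append, List.reverse_singleton, List.singleton_append] at h ⊢
  exact cons_sublist_of_cons_sublist_append h (by simpa using ha)

theorem append_cons_inj_of_notMem_of_notMem {x' y' : List α} (hx : a ∉ x) (hx' : a ∉ x') :
    x ++ a :: y = x' ++ a :: y' ↔ x = x' ∧ y = y' := by
  refine ⟨fun h => ?_, fun ⟨hx, hy⟩ => hx ▸ hy ▸ rfl⟩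
  rcases List.append_eq_append_iff.1 h with ⟨u, rfl, h⟩ | ⟨u, rfl, h⟩ <;> cases u <;> simp_all

theorem triple_sublist_ofFn_iff {n : ℕ} {f : Fin n → α} :
    [a, b, c] <+ List.ofFn f ↔ ∃ i j k, i < j ∧ j < k ∧ f i = a ∧ f j = b ∧ f k = c := by
  constructor
  · intro h
    obtain ⟨is, his, hlt⟩ := List.sublist_eq_map_getElem h
    match is with
    | [i, j, k] =>
      simp only [List.pairwise_cons, List.mem_cons, forall_eq_or_imp] at hlt
      simp only [List.map_cons, List.map_nil, List.cons.injEq, and_true, Fin.getElem_fin,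
        List.getElem_ofFn] at his
      exact ⟨i.cast (by simp), j.cast (by simp), k.cast (by simp), hlt.1.1, hlt.2.1.1,
        his.1.symm, his.2.1.symm, his.2.2.symm⟩
    | [] | [_] | [_, _] | _ :: _ :: _ :: _ :: _ => simp at his
  · rintro ⟨i, j, k, hij, hjk, rfl, rfl, rfl⟩
    simpa using List.map_getElem_sublist (l := List.ofFn f)
      (is := [i.cast (by simp), j.cast (by simp), k.cast (by simp)])
      (by simp [hij, hjk, hij.trans hjk])

end List

/-- A *Stirling word*: every letter that occurs does so exactly twice, and the letters between
its two occurrences are larger. -/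
structure IsStirlingWord {α : Type*} [LinearOrder α] (w : List α) : Prop where
  count_eq_two : ∀ x ∈ w, w.count x = 2
  lt_of_sublist : ∀ a b, [a, b, a] <+ w → a < b

namespace IsStirlingWord

variable {α : Type*} [LinearOrder α] {v : α} {p q r u w : List α}

protected theorem nil : IsStirlingWord ([] : List α) := ⟨by simp, by simp⟩

theorem of_sublist (hw : IsStirlingWord w) (h : u <+ w) (hu : ∀ x ∈ u, u.count x = w.count x) :
    IsStirlingWord u where
  count_eq_two x hx := (hu x hx).trans (hw.count_eq_two x (h.subset hx))
  lt_of_sublist a b hab := hw.lt_of_sublist a b (hab.trans h)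

theorem append_cons_append_cons (hp : IsStirlingWord p) (hq : IsStirlingWord q)
    (hr : IsStirlingWord r) (hlt : ∀ x ∈ p ++ q ++ r, v < x) (hpq : p.Disjoint q)
    (hpr : p.Disjoint r) (hqr : q.Disjoint r) : IsStirlingWord (p ++ v :: (q ++ v :: r)) := by
  have hv : v ∉ p ++ q ++ r := fun h => (hlt v h).false
  have count_eq_two : ∀ x ∈ p ++ v :: (q ++ v :: r), (p ++ v :: (q ++ v :: r)).count x = 2 := by
    intro x hx
    have := hp.count_eq_two x
    have := hq.count_eq_two x
    have := hr.count_eq_two x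
    grind [List.count_eq_zero_of_not_mem, List.Disjoint]
  refine ⟨count_eq_two, fun a b h => ?_⟩
  by_cases hav : a = v
  · subst hav
    rcases eq_or_ne b a with rfl | hb
    · have h3 : 3 ≤ _ := List.replicate_sublist_iff.1 h
      rw [count_eq_two b (by simp)] at h3
      omega
    · exact hlt b (by grind [h.subset])
  · by_cases hap : a ∈ p
    · exact hp.lt_of_sublist a b (append_singleton_sublist_of_sublist_append (u := [a, b]) h
        (by grind [List.Disjoint]))
    have h : [a, b, a] <+ q ++ v :: r :=
      cons_sublist_of_cons_sublist_append (x := p ++ [v]) (by simpa using h) (by simp [hap, hav])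
    by_cases haq : a ∈ q
    · exact hq.lt_of_sublist a b (append_singleton_sublist_of_sublist_append (u := [a, b]) h
        (by grind [List.Disjoint]))
    · exact hr.lt_of_sublist a b <|
        cons_sublist_of_cons_sublist_append (x := q ++ [v]) (by simpa using h) (by simp [haq, hav])

theorem exists_eq_append_cons_append_cons (hw : IsStirlingWord w) (hne : w ≠ []) :
    ∃ v p q r, w = p ++ v :: (q ++ v :: r) ∧ ∀ x ∈ p ++ q ++ r, v < x := by
  obtain ⟨v, hv, hmin⟩ : ∃ v ∈ w, ∀ x ∈ w, v ≤ x := by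
    simpa using w.toFinset.exists_min_image id (by simpa using hne)
  have hcount := hw.count_eq_two v hv
  obtain ⟨p, u, rfl, hp⟩ := List.eq_append_cons_of_mem hv
  have hu : u.count v = 1 := by
    simpa [List.count_append, List.count_eq_zero_of_not_mem hp] using hcount
  obtain ⟨q, r, rfl, hq⟩ := List.eq_append_cons_of_mem (List.count_pos_iff.1 (hu ▸ one_pos))
  have hr : v ∉ r := List.count_eq_zero.1 <| by
    simpa [List.count_append, List.count_eq_zero_of_not_mem hq] using hu
  refine ⟨v, p, q, r, rfl, fun x hx => (hmin x (by grind)).lt_of_ne ?_⟩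
  rintro rfl
  grind

theorem of_append_cons_append_cons (hw : IsStirlingWord (p ++ v :: (q ++ v :: r)))
    (hlt : ∀ x ∈ p ++ q ++ r, v < x) :
    (IsStirlingWord p ∧ IsStirlingWord q ∧ IsStirlingWord r) ∧
      p.Disjoint q ∧ p.Disjoint r ∧ q.Disjoint r := by
  have not_sublist : ∀ x ∈ p ++ q ++ r, ¬ [x, v, x] <+ p ++ v :: (q ++ v :: r) :=
    fun x hx h => (hlt x hx).asymm (hw.lt_of_sublist x v h)
  have hpq : p.Disjoint q := fun x hxp hxq => not_sublist x (by simp [hxp]) <|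
    (List.singleton_sublist.2 hxp).append (.cons_cons v (by simp [hxq]))
  have hpr : p.Disjoint r := fun x hxp hxr => not_sublist x (by simp [hxp]) <|
    (List.singleton_sublist.2 hxp).append (.cons_cons v (by simp [hxr]))
  have hqr : q.Disjoint r := fun x hxq hxr => not_sublist x (by simp [hxq]) <|
    List.sublist_append_of_sublist_right <| .cons v <|
      (List.singleton_sublist.2 hxq).append (.cons_cons v (by simp [hxr]))
  have : v ∉ p ++ q ++ r := fun h => (hlt v h).false
  refine ⟨⟨hw.of_sublist (by simp) ?_, hw.of_sublist (by grind) ?_, hw.of_sublist (by grind) ?_⟩,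
    hpq, hpr, hqr⟩ <;>
  · intro x hx
    grind [List.count_eq_zero_of_not_mem, List.Disjoint]

end IsStirlingWord

/-- Plane trees in which every node has a label and three, possibly empty, subtrees: a left, a
middle and a right one. -/
inductive TernaryTree (α : Type*)
  | nil : TernaryTree α
  | node (v : α) (l m r : TernaryTree α) : TernaryTree α

namespace TernaryTree

variable {α : Type*} {t : TernaryTree α}

/-- The word of a tree, under which increasing trees correspond to Stirling words: it is read off
in depth-first order, recording each label before and after its middle subtree. -/
def word : TernaryTree α → List α
  | nil => []
  | node v l m r => l.word ++ v :: (m.word ++ v :: r.word)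

/-- The involution that exchanges the left and the middle subtree of every node. -/
def swap : TernaryTree α → TernaryTree α
  | nil => nil
  | node v l m r => node v m.swap l.swap r.swap

/-- Whether a tree is empty. -/
def isNil : TernaryTree α → Bool
  | nil => true
  | node .. => false

/-- The number of nodes of a given type, where the type of a node records whether its left and
its middle subtree are empty. -/
def nodeCount (p : Bool × Bool) : TernaryTree α → ℕ
  | nil => 0
  | node _ l m r =>
    (if (l.isNil, m.isNil) = p then 1 else 0) + l.nodeCount p + m.nodeCount p + r.nodeCount p

theorem swap_involutive : Function.Involutive (swap (α := α)) := by
  intro t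
  induction t with
  | nil => rfl
  | node v l m r hl hm hr => simp only [swap, hl, hm, hr]

theorem isNil_swap (t : TernaryTree α) : t.swap.isNil = t.isNil := by
  cases t <;> rfl

theorem word_eq_nil_iff : t.word = [] ↔ t.isNil := by
  cases t <;> simp [word, isNil]

theorem mem_word_swap {x : α} : x ∈ t.swap.word ↔ x ∈ t.word := by
  induction t with
  | nil => rfl
  | node v l m r hl hm hr =>
    simp only [swap, word, List.mem_append, List.mem_cons, hl, hm, hr]
    tauto

theorem nodeCount_swap (p : Bool × Bool) (t : TernaryTree α) :
    t.swap.nodeCount p = t.nodeCount p.swap := by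
  induction t with
  | nil => rfl
  | node v l m r hl hm hr =>
    have htype : (m.isNil, l.isNil) = p ↔ (l.isNil, m.isNil) = p.swap := by
      rw [← Prod.swap_inj, Prod.swap_prod_mk]
    simp only [swap, nodeCount, isNil_swap, hl, hm, hr, htype]
    ring

/-- Labels strictly increase away from the root and are pairwise distinct. -/
def Increasing [LT α] : TernaryTree α → Prop
  | nil => True
  | node v l m r =>
    (∀ x ∈ l.word ++ m.word ++ r.word, v < x) ∧
      (l.word.Disjoint m.word ∧ l.word.Disjoint r.word ∧ m.word.Disjoint r.word) ∧
      l.Increasing ∧ m.Increasing ∧ r.Increasing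

theorem Increasing.swap [LT α] (ht : t.Increasing) : t.swap.Increasing := by
  induction t with
  | nil => trivial
  | node v l m r hl hm hr =>
    obtain ⟨hlt, ⟨hlm, hlr, hmr⟩, il, im, ir⟩ := ht
    refine ⟨?_, ?_, hm im, hl il, hr ir⟩
    · simp only [List.mem_append, mem_word_swap] at hlt ⊢
      exact fun x hx => hlt x (by tauto)
    · simp only [List.Disjoint, mem_word_swap] at hlm hlr hmr ⊢
      exact ⟨fun x hm hl => hlm hl hm, hmr, hlr⟩

theorem Increasing.le_of_mem_word [Preorder α] {v x : α} {l m r : TernaryTree α}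
    (ht : (node v l m r).Increasing) (hx : x ∈ (node v l m r).word) : v ≤ x := by
  have := ht.1 x
  grind [word]

theorem word_injOn [PartialOrder α] : Set.InjOn word {t : TernaryTree α | t.Increasing} := by
  intro s hs t ht h
  induction s generalizing t with
  | nil => cases t with
    | nil => rfl
    | node v l m r => simp [word] at h
  | node v l m r hl hm hr => cases t with
    | nil => simp [word] at h
    | node v' l' m' r' =>
      obtain rfl : v = v' := le_antisymm (hs.le_of_mem_word (h ▸ by simp [word]))
        (ht.le_of_mem_word (h ▸ by simp [word]))
      obtain ⟨hlt, -, il, im, ir⟩ := hs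
      obtain ⟨hlt', -, il', im', ir'⟩ := ht
      have hv : v ∉ l.word ++ m.word ++ r.word := fun h => (hlt v h).false
      have hv' : v ∉ l'.word ++ m'.word ++ r'.word := fun h => (hlt' v h).false
      simp only [List.mem_append, not_or] at hv hv'
      obtain ⟨el, h'⟩ := (append_cons_inj_of_notMem_of_notMem hv.1.1 hv'.1.1).1 h
      obtain ⟨em, er⟩ := (append_cons_inj_of_notMem_of_notMem hv.1.2 hv'.1.2).1 h'
      rw [hl il il' el, hm im im' em, hr ir ir' er]

theorem Increasing.isStirlingWord [LinearOrder α] (ht : t.Increasing) : IsStirlingWord t.word := by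
  induction t with
  | nil => exact .nil
  | node v l m r hl hm hr =>
    obtain ⟨hlt, ⟨hlm, hlr, hmr⟩, il, im, ir⟩ := ht
    exact (hl il).append_cons_append_cons (hm im) (hr ir) hlt hlm hlr hmr

theorem exists_increasing_word_eq [LinearOrder α] {w : List α} (hw : IsStirlingWord w) :
    ∃ t : TernaryTree α, t.Increasing ∧ t.word = w := by
  induction hn : w.length using Nat.strong_induction_on generalizing w with
  | _ n ih =>
    subst hn
    rcases eq_or_ne w [] with rfl | hne
    · exact ⟨nil, trivial, rfl⟩
    obtain ⟨v, p, q, r, rfl, hlt⟩ := hw.exists_eq_append_cons_append_cons hne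
    obtain ⟨⟨hp, hq, hr⟩, hdisj⟩ := hw.of_append_cons_append_cons hlt
    obtain ⟨l, il, rfl⟩ := ih _ (by grind) hp rfl
    obtain ⟨m, im, rfl⟩ := ih _ (by grind) hq rfl
    obtain ⟨s, is, rfl⟩ := ih _ (by grind) hr rfl
    exact ⟨node v l m s, ⟨hlt, hdisj, il, im, is⟩, rfl⟩

end TernaryTree

section ShapeCount

variable {α : Type*} [LinearOrder α]

/-- The number of interior positions of a word whose *shape* is `o`, where the shape of a position
consists of the comparison of its left neighbour with it and of the comparison of it with its right
neighbour. -/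
def shapeCount (o : Ordering × Ordering) : List α → ℕ
  | a :: b :: c :: w =>
    (if (compare a b, compare b c) = o then 1 else 0) + shapeCount o (b :: c :: w)
  | _ => 0

theorem shapeCount_cons_cons_of_ne {o : Ordering × Ordering} {a b : α} {w : List α}
    (h : ∀ c ∈ w.head?, (compare a b, compare b c) ≠ o) :
    shapeCount o (a :: b :: w) = shapeCount o (b :: w) := by
  cases w with
  | nil => rfl
  | cons c w => simp [shapeCount, h c rfl]

theorem shapeCount_eq_sum_range (o : Ordering × Ordering) (d : α) (w : List α) :
    shapeCount o w = ∑ i ∈ Finset.range (w.length - 2),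
      if (compare (w.getD i d) (w.getD (i + 1) d),
        compare (w.getD (i + 1) d) (w.getD (i + 2) d)) = o then 1 else 0 := by
  induction w with
  | nil => rfl
  | cons a w ih =>
    match w with
    | [] | [_] => rfl
    | b :: c :: w =>
      have hlength : (a :: b :: c :: w).length - 2 = (b :: c :: w).length - 2 + 1 := by simp
      rw [shapeCount, ih, hlength, Finset.sum_range_succ', add_comm]
      rfl

theorem shapeCount_eq_card_filter_Icc (o : Ordering × Ordering) (d : α) (w : List α) :
    shapeCount o w = ((Finset.Icc 1 (w.length - 2)).filter fun i =>
      (compare (w.getD (i - 1) d) (w.getD i d),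
        compare (w.getD i d) (w.getD (i + 1) d)) = o).card := by
  rw [shapeCount_eq_sum_range o d, Finset.card_filter,
    ← Finset.Ico_add_one_right_eq_Icc, Finset.sum_Ico_eq_sum_range, Nat.add_sub_cancel]
  refine Finset.sum_congr rfl fun i _ => ?_
  rw [Nat.add_sub_cancel_left, add_comm 1 i]

end ShapeCount

namespace TernaryTree

/-- The shape of the first occurrence of the label of a node of type `p` in the word of an
increasing tree. The types `(true, true)`, `(true, false)` and `(false, true)` give left
ascent-plateaus, double ascents and descent-plateaus, respectively. -/
def nodeShape (p : Bool × Bool) : Ordering × Ordering :=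
  (if p.1 then .lt else .gt, if p.2 then .eq else .lt)

theorem nodeShape_injective : Function.Injective nodeShape := by decide

variable {α : Type*} [LinearOrder α] {a v : α} {s : List α} {t m : TernaryTree α} {p : Bool × Bool}

theorem compare_getLastD_word_of_lt (ha : a < v) (h : ∀ x ∈ t.word, v < x) :
    compare (t.word.getLastD a) v = if t.isNil then .lt else .gt := by
  split_ifs with ht
  · rwa [word_eq_nil_iff.2 ht, List.getLastD_nil, compare_lt_iff_lt]
  · rw [← word_eq_nil_iff] at ht
    rw [compare_gt_iff_gt, List.getLastD_eq_getLast?, List.getLast?_eq_some_getLast ht]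
    exact h _ (List.getLast_mem ht)

theorem compare_getLastD_word_ne_lt (h : ∀ x ∈ t.word, v < x) :
    compare (t.word.getLastD v) v ≠ .lt := by
  rw [Ne, compare_lt_iff_lt, not_lt]
  by_cases ht : t.word = []
  · simp [ht]
  · rw [List.getLastD_eq_getLast?, List.getLast?_eq_some_getLast ht]
    exact (h _ (List.getLast_mem ht)).le

theorem shapeCount_first_occurrence {l : TernaryTree α} (ha : a < v) (hl : ∀ x ∈ l.word, v < x)
    (hm : ∀ x ∈ m.word, v < x) :
    shapeCount (nodeShape p) (l.word.getLastD a :: v :: (m.word ++ v :: s)) =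
      (if (l.isNil, m.isNil) = p then 1 else 0) +
        shapeCount (nodeShape p) (v :: (m.word ++ v :: s)) := by
  obtain ⟨c, u, hcu, hright⟩ : ∃ c u, m.word ++ v :: s = c :: u ∧
      compare v c = if m.isNil then .eq else .lt := by
    split_ifs with h
    · exact ⟨v, s, by rw [word_eq_nil_iff.2 h, List.nil_append], compare_eq_iff_eq.2 rfl⟩
    · obtain ⟨c, u, hcu⟩ := List.exists_cons_of_ne_nil (mt word_eq_nil_iff.1 h)
      exact ⟨c, u ++ v :: s, by rw [hcu, List.cons_append],
        compare_lt_iff_lt.2 (hm c (by simp [hcu]))⟩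
  have hshape : (compare (l.word.getLastD a) v, compare v c) = nodeShape (l.isNil, m.isNil) :=
    Prod.ext (compare_getLastD_word_of_lt ha hl) hright
  simp only [hcu, shapeCount, hshape, nodeShape_injective.eq_iff]

/- The shape `(.gt, .lt)` of the nodes of type `(false, false)` has to be excluded: it is also that
of the second occurrence of a label with non-empty middle subtree that is followed by an ascent. -/
theorem shapeCount_second_occurrence (hp : p ≠ (false, false)) (hm : ∀ x ∈ m.word, v < x)
    (hs : v ∉ s.head?) :
    shapeCount (nodeShape p) (m.word.getLastD v :: v :: s) =
      shapeCount (nodeShape p) (v :: s) := by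
  refine shapeCount_cons_cons_of_ne fun c hc h => ?_
  have hleft := compare_getLastD_word_ne_lt hm
  have hright : compare v c ≠ .eq := by
    rw [Ne, compare_eq_iff_eq]
    rintro rfl
    exact hs hc
  obtain ⟨p₁, p₂⟩ := p
  cases p₁ <;> cases p₂ <;> simp_all [nodeShape]

theorem Increasing.shapeCount_cons_word_append (hp : p ≠ (false, false)) (ht : t.Increasing)
    (ha : ∀ x ∈ t.word, a < x) (hs : ∀ b ∈ s.head?, b ∉ t.word) :
    shapeCount (nodeShape p) (a :: (t.word ++ s)) =
      t.nodeCount p + shapeCount (nodeShape p) (t.word.getLastD a :: s) := by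
  induction t generalizing a s with
  | nil => simp [word, nodeCount]
  | node v l m r hl hm hr =>
    obtain ⟨hlt, -, il, im, ir⟩ := ht
    have hltl : ∀ x ∈ l.word, v < x := fun x hx => hlt x (by simp [hx])
    have hltm : ∀ x ∈ m.word, v < x := fun x hx => hlt x (by simp [hx])
    have hltr : ∀ x ∈ r.word, v < x := fun x hx => hlt x (by simp [hx])
    simp only [word, List.mem_append, List.mem_cons] at ha hs
    have hav : a < v := ha v (by simp)
    have hvs : v ∉ (r.word ++ s).head? := by
      cases hw : r.word <;> grind
    calc shapeCount (nodeShape p) (a :: ((node v l m r).word ++ s))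
        = shapeCount (nodeShape p) (a :: (l.word ++ v :: (m.word ++ v :: (r.word ++ s)))) := by
          simp [word]
      _ = l.nodeCount p + shapeCount (nodeShape p)
            (l.word.getLastD a :: v :: (m.word ++ v :: (r.word ++ s))) :=
          hl il (fun x hx => ha x (by simp [hx])) (by grind)
      _ = l.nodeCount p + ((if (l.isNil, m.isNil) = p then 1 else 0) +
            shapeCount (nodeShape p) (v :: (m.word ++ v :: (r.word ++ s)))) := by
          rw [shapeCount_first_occurrence hav hltl hltm]
      _ = l.nodeCount p + ((if (l.isNil, m.isNil) = p then 1 else 0) + (m.nodeCount p +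
            shapeCount (nodeShape p) (v :: (r.word ++ s)))) := by
          rw [hm im hltm (by grind), shapeCount_second_occurrence hp hltm hvs]
      _ = l.nodeCount p + ((if (l.isNil, m.isNil) = p then 1 else 0) + (m.nodeCount p +
            (r.nodeCount p + shapeCount (nodeShape p) (r.word.getLastD v :: s)))) := by
          rw [hr ir hltr (by grind)]
      _ = (node v l m r).nodeCount p +
            shapeCount (nodeShape p) ((node v l m r).word.getLastD a :: s) := by
          have hlast : (node v l m r).word.getLastD a = r.word.getLastD v := by
            simp [word, List.getLastD_eq_getLast?, List.getLast?_append, List.getLast?_cons]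
          rw [hlast, nodeCount]
          ring

theorem Increasing.shapeCount_cons_word (hp : p ≠ (false, false)) (ht : t.Increasing)
    (ha : ∀ x ∈ t.word, a < x) :
    shapeCount (nodeShape p) (a :: t.word) = t.nodeCount p := by
  simpa [shapeCount] using ht.shapeCount_cons_word_append hp ha (s := []) (by simp)

end TernaryTree

section ToWord

variable {n : ℕ} {σ : Fin (2 * n) → Fin (n + 1)} {w : List ℕ}

/-- The word of natural numbers that lists the values of `σ`. Its letters have the type of the
labels of trees, independently of `n`. -/
def toWord (σ : Fin (2 * n) → Fin (n + 1)) : List ℕ := List.ofFn fun i => (σ i : ℕ)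

theorem length_toWord : (toWord σ).length = 2 * n := List.length_ofFn

theorem toWord_injective : Function.Injective (toWord (n := n)) := fun _ _ h =>
  funext fun i => Fin.ext (congrFun (List.ofFn_injective h) i)

theorem exists_toWord_eq (hw : w.length = 2 * n) (hle : ∀ x ∈ w, x ≤ n) :
    ∃ σ : Fin (2 * n) → Fin (n + 1), toWord σ = w := by
  refine ⟨fun i => ⟨w[i], Nat.lt_succ_of_le (hle _ (List.getElem_mem _))⟩, ?_⟩
  apply List.ext_getElem <;> simp [toWord, hw]

theorem sval_eq_getD (σ : Fin (2 * n) → Fin (n + 1)) (i : ℕ) :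
    sval σ i = (0 :: toWord σ).getD i 0 := by
  cases i with
  | zero => simp [sval]
  | succ i => by_cases h : i + 1 ≤ 2 * n <;> simp [sval, toWord, h]

theorem shapeCount_zero_cons_toWord (o : Ordering × Ordering) (σ : Fin (2 * n) → Fin (n + 1)) :
    shapeCount o (0 :: toWord σ) = ((Finset.Icc 1 (2 * n - 1)).filter fun i =>
      compare (sval σ (i - 1)) (sval σ i) = o.1 ∧
        compare (sval σ i) (sval σ (i + 1)) = o.2).card := by
  have hlength : (0 :: toWord σ).length - 2 = 2 * n - 1 := by
    rw [List.length_cons, length_toWord]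
    omega
  simp only [shapeCount_eq_card_filter_Icc o 0, hlength, sval_eq_getD, Prod.ext_iff]

theorem lapQ_eq_shapeCount : lapQ σ = shapeCount (.lt, .eq) (0 :: toWord σ) := by
  simp only [shapeCount_zero_cons_toWord, compare_lt_iff_lt, compare_eq_iff_eq, lapQ]

theorem dascQ_eq_shapeCount : dascQ σ = shapeCount (.lt, .lt) (0 :: toWord σ) := by
  simp only [shapeCount_zero_cons_toWord, compare_lt_iff_lt, dascQ]

theorem dpQ_eq_shapeCount : dpQ σ = shapeCount (.gt, .eq) (0 :: toWord σ) := by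
  simp only [shapeCount_zero_cons_toWord, compare_gt_iff_gt, compare_eq_iff_eq, dpQ]
  refine congrArg Finset.card (Finset.ext fun i => ?_)
  rcases eq_or_ne i 1 with rfl | hi
  · simp [sval]
  · simp only [Finset.mem_filter, Finset.mem_Icc]
    omega

theorem count_toWord (σ : Fin (2 * n) → Fin (n + 1)) (v : Fin (n + 1)) :
    (toWord σ).count (v : ℕ) = (Finset.univ.filter fun i => σ i = v).card := by
  have h := Fin.card_filter_univ_eq_vector_get_eq_count (v : ℕ) (.ofFn fun i => (σ i : ℕ))
  simpa [toWord, Fin.ext_iff, eq_comm] using h.symm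

theorem zero_notMem_toWord (h : ∀ v : Fin (n + 1), (v : ℕ) ≠ 0 → (toWord σ).count (v : ℕ) = 2) :
    0 ∉ toWord σ := by
  have hsum : 2 * n = ∑ v : Fin (n + 1), (toWord σ).count (v : ℕ) := by
    simpa [count_toWord] using
      Finset.card_eq_sum_card_fiberwise (f := σ) (s := Finset.univ) (t := Finset.univ) (by simp)
  rw [Fin.sum_univ_succ, Finset.sum_congr rfl fun (v : Fin n) _ => h v.succ (by simp)] at hsum
  simp only [Fin.val_zero, Finset.sum_const, Finset.card_univ, Fintype.card_fin,
    smul_eq_mul] at hsum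
  rw [← List.count_eq_zero]
  omega

theorem mem_StirlingSet_iff : σ ∈ StirlingSet n ↔
    IsStirlingWord (toWord σ) ∧ ∀ x, x ∈ toWord σ ↔ x ∈ Set.Icc 1 n := by
  have hle : ∀ x ∈ toWord σ, x ≤ n := by simp [toWord, Fin.is_le]
  have horder : (∀ i j k, i < j → j < k → σ i = σ k → σ i < σ j) ↔
      ∀ a b, [a, b, a] <+ toWord σ → a < b := by
    refine ⟨fun h a b hab => ?_, fun h i j k hij hjk hik => ?_⟩
    · obtain ⟨i, j, k, hij, hjk, rfl, rfl, hki⟩ := triple_sublist_ofFn_iff.1 hab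
      exact h i j k hij hjk (Fin.ext hki.symm)
    · exact h _ _ (triple_sublist_ofFn_iff.2 ⟨i, j, k, hij, hjk, rfl, rfl, by rw [hik]⟩)
  have hcount : (∀ v : Fin (n + 1), (v : ℕ) ≠ 0 → (toWord σ).count (v : ℕ) = 2) ↔
      (∀ x ∈ toWord σ, (toWord σ).count x = 2) ∧ ∀ x, x ∈ toWord σ ↔ x ∈ Set.Icc 1 n := by
    refine ⟨fun h => ?_, fun ⟨h2, hx⟩ v hv => h2 v ((hx v).2 ⟨Nat.pos_of_ne_zero hv, v.is_le⟩)⟩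
    have h0 := zero_notMem_toWord h
    have h2 : ∀ x ∈ Set.Icc 1 n, (toWord σ).count x = 2 := fun x hx =>
      h ⟨x, Nat.lt_succ_of_le hx.2⟩ (Nat.pos_iff_ne_zero.1 hx.1)
    have hmem : ∀ x, x ∈ toWord σ ↔ x ∈ Set.Icc 1 n := fun x =>
      ⟨fun hx => ⟨Nat.pos_of_ne_zero (ne_of_mem_of_not_mem hx h0), hle x hx⟩,
        fun hx => List.count_pos_iff.1 (h2 x hx ▸ two_pos)⟩
    exact ⟨fun x hx => h2 x ((hmem x).1 hx), hmem⟩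
  simp only [StirlingSet, Finset.mem_filter, Finset.mem_univ, true_and, ← count_toWord, hcount,
    horder]
  exact ⟨fun ⟨⟨h2, hx⟩, hlt⟩ => ⟨⟨h2, hlt⟩, hx⟩, fun ⟨⟨h2, hlt⟩, hx⟩ => ⟨⟨h2, hx⟩, hlt⟩⟩

end ToWord

/-- The Stirling words with letters `1, …, n`: the one-line notations of the Stirling permutations
of order `n`. -/
def stirlingWords (n : ℕ) : Set (List ℕ) :=
  {w | IsStirlingWord w ∧ ∀ x, x ∈ w ↔ x ∈ Set.Icc 1 n}

/-- The increasing ternary trees with labels `1, …, n`. -/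
def stirlingTrees (n : ℕ) : Set (TernaryTree ℕ) :=
  {t | t.Increasing ∧ ∀ x, x ∈ t.word ↔ x ∈ Set.Icc 1 n}

theorem length_of_mem_stirlingWords {n : ℕ} {w : List ℕ} (hw : w ∈ stirlingWords n) :
    w.length = 2 * n := by
  have hmem : w.toFinset = Finset.Icc 1 n := by
    ext x
    rw [List.mem_toFinset, hw.2, Finset.mem_Icc, Set.mem_Icc]
  calc w.length = ∑ x ∈ w.toFinset, w.count x := w.sum_toFinset_count_eq_length.symm
    _ = ∑ x ∈ w.toFinset, 2 :=
      Finset.sum_congr rfl fun x hx => hw.1.count_eq_two x (List.mem_toFinset.1 hx)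
    _ = 2 * n := by rw [hmem, Finset.sum_const, Nat.card_Icc, smul_eq_mul]; omega

theorem bijOn_toWord (n : ℕ) : Set.BijOn (toWord (n := n)) (StirlingSet n) (stirlingWords n) := by
  refine ⟨fun σ hσ => mem_StirlingSet_iff.1 hσ, toWord_injective.injOn, fun w hw => ?_⟩
  obtain ⟨σ, rfl⟩ := exists_toWord_eq (length_of_mem_stirlingWords hw)
    fun x hx => ((hw.2 x).1 hx).2
  exact ⟨σ, mem_StirlingSet_iff.2 hw, rfl⟩

theorem bijOn_word_stirlingTrees (n : ℕ) :
    Set.BijOn TernaryTree.word (stirlingTrees n) (stirlingWords n) := by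
  refine ⟨fun t ht => ⟨ht.1.isStirlingWord, ht.2⟩,
    TernaryTree.word_injOn.mono fun t ht => ht.1, fun w hw => ?_⟩
  obtain ⟨t, ht, rfl⟩ := TernaryTree.exists_increasing_word_eq hw.1
  exact ⟨t, ⟨ht, hw.2⟩, rfl⟩

theorem bijOn_swap_stirlingTrees (n : ℕ) :
    Set.BijOn TernaryTree.swap (stirlingTrees n) (stirlingTrees n) := by
  have mapsTo_swap : Set.MapsTo TernaryTree.swap (stirlingTrees n) (stirlingTrees n) :=
    fun t ht => ⟨ht.1.swap, fun x => TernaryTree.mem_word_swap.trans (ht.2 x)⟩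
  exact ⟨mapsTo_swap, TernaryTree.swap_involutive.injective.injOn,
    fun t ht => ⟨t.swap, mapsTo_swap ht, TernaryTree.swap_involutive t⟩⟩

theorem card_filter_StirlingSet (n i j k : ℕ) :
    ((StirlingSet n).filter (fun σ => lapQ σ = i ∧ dascQ σ = j ∧ dpQ σ = k)).card =
      {t ∈ stirlingTrees n | t.nodeCount (true, true) = i ∧ t.nodeCount (true, false) = j ∧
        t.nodeCount (false, true) = k}.ncard := by
  let p (w : List ℕ) : Prop := shapeCount (.lt, .eq) (0 :: w) = i ∧
    shapeCount (.lt, .lt) (0 :: w) = j ∧ shapeCount (.gt, .eq) (0 :: w) = k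
  have hshape : ∀ t ∈ stirlingTrees n, ∀ q ≠ (false, false),
      shapeCount (TernaryTree.nodeShape q) (0 :: t.word) = t.nodeCount q := fun t ht q hq =>
    ht.1.shapeCount_cons_word hq fun x hx => ((ht.2 x).1 hx).1
  calc _ = {σ ∈ (StirlingSet n : Set _) | p (toWord σ)}.ncard := by
        simp only [p, ← lapQ_eq_shapeCount, ← dascQ_eq_shapeCount, ← dpQ_eq_shapeCount]
        rw [← Set.ncard_coe_finset, Finset.coe_filter]
        rfl
    _ = {t ∈ stirlingTrees n | p t.word}.ncard := by
        rw [ncard_sep_comp_of_bijOn (bijOn_toWord n),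
          ncard_sep_comp_of_bijOn (bijOn_word_stirlingTrees n)]
    _ = _ := by
        refine congrArg Set.ncard (Set.ext fun t => and_congr_right fun ht => ?_)
        rw [← hshape t ht (true, true) (by decide), ← hshape t ht (true, false) (by decide),
          ← hshape t ht (false, true) (by decide)]
        rfl

theorem statement_13 (n : ℕ) (hn : 1 ≤ n) (i j k : ℕ) :
    ((StirlingSet n).filter (fun σ => lapQ σ = i ∧ dascQ σ = j ∧ dpQ σ = k)).card =
      ((StirlingSet n).filter (fun σ => lapQ σ = i ∧ dascQ σ = k ∧ dpQ σ = j)).card := by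
  rw [card_filter_StirlingSet, card_filter_StirlingSet,
    ← ncard_sep_comp_of_bijOn (bijOn_swap_stirlingTrees n)]
  simp only [TernaryTree.nodeCount_swap, Prod.swap_prod_mk, and_comm (a := _ = j)]
end
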